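/- Let C be a depth-2 circuit computing the multiplication of two q×q matrices A, B over GF(2). For ℓ ∈ Fin q, let t_{u,ℓ} denote the number of wires leaving input nodes corresponding to entries B[k,ℓ] of the ℓ-th column of B (that is, t_{u,ℓ} = Σ_{g∈G} |S_g ∩ {B-entry (k,ℓ) : k ∈ Fin q}|), and let t_{q,ℓ} denote the number of wires entering output gates of the ℓ-th column of the product (that is, t_{q,ℓ} = Σ_{i∈Fin q} |T_{(i,ℓ)}|). Then for every ℓ ∈ Fin q, t_{u,ℓ} + t_{q,ℓ} ≥ q². -/

import Mathlib

/-- A depth-2 circuit with input index type `I` and output index type `O`: a finite type `G`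
of interior gates; each gate `g` reads the inputs in the finite set `S g` and computes an
arbitrary function `f g` of them; each output `o` reads the gates in the finite set `T o`
and computes an arbitrary function `h o` of their values.  Gates have unbounded fan-in and
fan-out. -/
structure Depth2Circuit (I O : Type) where
  G : Type
  [fintypeG : Fintype G]
  S : G → Finset I
  f : (g : G) → (↥(S g) → ZMod 2) → ZMod 2
  T : O → Finset G
  h : (o : O) → (↥(T o) → ZMod 2) → ZMod 2

attribute [instance] Depth2Circuit.fintypeG

/-- The value computed by interior gate `g` on input `x`. -/
def Depth2Circuit.gateOut {I O : Type} (C : Depth2Circuit I O)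
    (x : I → ZMod 2) (g : C.G) : ZMod 2 :=
  C.f g (fun i => x i.val)

/-- The value of output `o` on input `x`. -/
def Depth2Circuit.out {I O : Type} (C : Depth2Circuit I O)
    (x : I → ZMod 2) (o : O) : ZMod 2 :=
  C.h o (fun g => C.gateOut x g.val)

/-- The input index type for `q × q` matrix multiplication: `Sum.inl (i, j)` indexes the
entry `A i j` of the first matrix, `Sum.inr (k, l)` the entry `B k l` of the second. -/
abbrev MMInput (q : ℕ) := (Fin q × Fin q) ⊕ (Fin q × Fin q)

/-- The input assignment encoding a pair of matrices `A, B`. -/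
def mmInput {q : ℕ} (A B : Matrix (Fin q) (Fin q) (ZMod 2)) : MMInput q → ZMod 2 :=
  Sum.elim (fun ij => A ij.1 ij.2) (fun kl => B kl.1 kl.2)

/-- A depth-2 circuit computes `q × q` matrix multiplication over `GF(2)` if on every pair
of input matrices `A, B`, the output indexed by `(i, ℓ)` equals `(A * B) i ℓ`. -/
def ComputesMM {q : ℕ} (C : Depth2Circuit (MMInput q) (Fin q × Fin q)) : Prop :=
  ∀ A B : Matrix (Fin q) (Fin q) (ZMod 2), ∀ i ℓ : Fin q,
    C.out (mmInput A B) (i, ℓ) = (A * B) i ℓ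

/-- The inputs corresponding to the `ℓ`-th column of the matrix `B`. -/
def bColumn (q : ℕ) (ℓ : Fin q) : Finset (MMInput q) :=
  Finset.image (fun k => Sum.inr (k, ℓ)) Finset.univ

/-!
Plug the unit vectors into the `ℓ`-th column of `B`, all other entries of `B` being `0`: the
`ℓ`-th column of the product then runs through the columns of `A`, so `A` can be read off the
outputs. On the other hand, a gate not wired to `B[k,ℓ]` does not notice whether this entry is `0`
or `1`. Hence one bit per wire determines all these outputs: for a wire from `B[k,ℓ]` to a gate, the
value of the gate at the `k`-th unit vector; for a wire from a gate to an output, the value of the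
gate at the zero vector. Since the `2 ^ (q ^ 2)` matrices `A` are encoded injectively by these bits,
there are at least `q ^ 2` wires.
-/

namespace Depth2Circuit

variable {I O : Type} (C : Depth2Circuit I O)

theorem gateOut_update_of_notMem [DecidableEq I] {g : C.G} {j : I} (hj : j ∉ C.S g)
    (x : I → ZMod 2) (a : ZMod 2) : C.gateOut (Function.update x j a) g = C.gateOut x g :=
  congrArg (C.f g) <| funext fun i ↦
    Function.update_of_ne (ne_of_mem_of_not_mem i.property hj) a x

theorem out_congr {x y : I → ZMod 2} {o : O}
    (hxy : ∀ g ∈ C.T o, C.gateOut x g = C.gateOut y g) : C.out x o = C.out y o :=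
  congrArg (C.h o) <| funext fun g ↦ hxy g g.property

section Wires

variable [DecidableEq I] {κ : Type*} (J : Finset I) (w : κ → O)

/-- The wires of `C` leaving the inputs in `J`, together with those entering the outputs `w i`.
The latter are indexed by `i`, so they are counted with multiplicity when `w` is not injective. -/
abbrev Wire : Type _ :=
  (Σ g : C.G, ↥(C.S g ∩ J)) ⊕ (Σ i : κ, ↥(C.T (w i)))

theorem card_wire [Fintype κ] :
    Fintype.card (C.Wire J w) = ∑ g, (C.S g ∩ J).card + ∑ i, (C.T (w i)).card := by
  simp only [Fintype.card_sum, Fintype.card_sigma, Fintype.card_coe]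

/-- One bit per wire, determining the outputs `w i` on each of the inputs obtained from `x` by
setting a single coordinate in `J` to `1`. A wire from input `j` to gate `g` carries the value of
`g` after coordinate `j` has been set; a wire from a gate to an output carries the value of the
gate on `x` itself. -/
def wireBits (x : I → ZMod 2) : C.Wire J w → ZMod 2 :=
  Sum.elim (fun p ↦ C.gateOut (Function.update x p.2 1) p.1) (fun p ↦ C.gateOut x p.2)

variable {C J w}

theorem gateOut_update_eq_of_wireBits_eq {x y : I → ZMod 2}
    (hxy : C.wireBits J w x = C.wireBits J w y) {j : I} (hj : j ∈ J) {i : κ} {g : C.G}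
    (hg : g ∈ C.T (w i)) :
    C.gateOut (Function.update x j 1) g = C.gateOut (Function.update y j 1) g := by
  by_cases hjg : j ∈ C.S g
  · exact congrFun hxy (.inl ⟨g, j, Finset.mem_inter.mpr ⟨hjg, hj⟩⟩)
  · rw [C.gateOut_update_of_notMem hjg, C.gateOut_update_of_notMem hjg]
    exact congrFun hxy (.inr ⟨i, g, hg⟩)

theorem out_update_eq_of_wireBits_eq {x y : I → ZMod 2}
    (hxy : C.wireBits J w x = C.wireBits J w y) {j : I} (hj : j ∈ J) (i : κ) :
    C.out (Function.update x j 1) (w i) = C.out (Function.update y j 1) (w i) :=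
  C.out_congr fun _ hg ↦ gateOut_update_eq_of_wireBits_eq hxy hj hg

theorem card_le_two_pow_wires_of_injective_out_update [Fintype κ] {α : Type*} [Fintype α]
    {x : α → I → ZMod 2}
    (hx : Function.Injective fun a (j : J) i ↦ C.out (Function.update (x a) j 1) (w i)) :
    Fintype.card α ≤ 2 ^ (∑ g, (C.S g ∩ J).card + ∑ i, (C.T (w i)).card) := by
  classical
  have wireBits_injective : Function.Injective fun a ↦ C.wireBits J w (x a) := fun a b hab ↦
    hx <| funext₂ fun j i ↦ out_update_eq_of_wireBits_eq hab j.property i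
  calc
    Fintype.card α ≤ Fintype.card (C.Wire J w → ZMod 2) :=
      Fintype.card_le_of_injective _ wireBits_injective
    _ = 2 ^ (∑ g, (C.S g ∩ J).card + ∑ i, (C.T (w i)).card) := by
      rw [Fintype.card_fun, ZMod.card, card_wire]

end Wires

end Depth2Circuit

theorem card_matrix {m n R : Type*} [Fintype m] [Fintype n] [Fintype R] [Fintype (Matrix m n R)] :
    Fintype.card (Matrix m n R) = Fintype.card R ^ (Fintype.card m * Fintype.card n) := by
  classical
  rw [← Fintype.card_congr Matrix.of, Fintype.card_fun, Fintype.card_fun, ← pow_mul, mul_comm]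

theorem update_mmInput_zero {q : ℕ} (A : Matrix (Fin q) (Fin q) (ZMod 2)) (k ℓ : Fin q)
    (a : ZMod 2) :
    Function.update (mmInput A 0) (Sum.inr (k, ℓ)) a = mmInput A (Matrix.single k ℓ a) := by
  rw [mmInput, mmInput, Sum.update_elim_inr]
  congr 1
  ext ⟨k', ℓ'⟩
  simp [Function.update_apply, Matrix.single_apply, Prod.ext_iff, eq_comm]

theorem ComputesMM.out_update_mmInput_zero {q : ℕ}
    {C : Depth2Circuit (MMInput q) (Fin q × Fin q)} (hC : ComputesMM C)
    (A : Matrix (Fin q) (Fin q) (ZMod 2)) (i k ℓ : Fin q) :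
    C.out (Function.update (mmInput A 0) (Sum.inr (k, ℓ)) 1) (i, ℓ) = A i k := by
  rw [update_mmInput_zero, hC, Matrix.mul_single_apply_same, mul_one]

/-- `x A` is any input encoding the matrix `A`, the inputs `v k` hold a vector, and the outputs
`w i` are required to give the product of `A` with this vector only at the unit vectors. -/
theorem matrix_multiplication_column_wire_lb_general
    {I O : Type} [DecidableEq I] {m n : Type*} [Fintype m] [Fintype n]
    (C : Depth2Circuit I O) (x : Matrix m n (ZMod 2) → I → ZMod 2) (v : n → I) (w : m → O)
    (hC : ∀ A i k, C.out (Function.update (x A) (v k) 1) (w i) = A i k) :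
    Fintype.card m * Fintype.card n ≤
      ∑ g, (C.S g ∩ Finset.univ.image v).card + ∑ i, (C.T (w i)).card := by
  classical
  have out_update_injective : Function.Injective fun A (j : Finset.univ.image v) i ↦
      C.out (Function.update (x A) j 1) (w i) := by
    intro A B hAB
    ext i k
    rw [← hC A i k, ← hC B i k]
    exact congrFun₂ hAB ⟨v k, Finset.mem_image_of_mem v (Finset.mem_univ k)⟩ i
  have card_le := C.card_le_two_pow_wires_of_injective_out_update out_update_injective
  rwa [card_matrix, ZMod.card, Nat.pow_le_pow_iff_right one_lt_two] at card_le

/-- For any depth-2 circuit computing `q × q` matrix multiplication over `GF(2)` and any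
column index `ℓ`, the number `t_{u,ℓ}` of wires leaving input nodes of the `ℓ`-th column of
`B` plus the number `t_{q,ℓ}` of wires entering output gates of the `ℓ`-th column of the
product is at least `q ^ 2`. -/
theorem matrix_multiplication_column_wire_lb
    (q : ℕ) (C : Depth2Circuit (MMInput q) (Fin q × Fin q))
    (hC : ComputesMM C) (ℓ : Fin q) :
    q ^ 2 ≤ (∑ g : C.G, (C.S g ∩ bColumn q ℓ).card)
      + (∑ i : Fin q, (C.T (i, ℓ)).card) := by
  simpa only [bColumn, sq, Fintype.card_fin] using matrix_multiplication_column_wire_lb_general C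
    (mmInput · 0) (fun k ↦ Sum.inr (k, ℓ)) (·, ℓ) fun A i k ↦ hC.out_update_mmInput_zero A i k ℓ
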